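/- arXiv:2602.14325 — 4 statements merged into one kernel-verified Lean document; each statement's English description precedes it below -/
import Mathlib

section
/- For every Lengyel transfer game L(b;x₁,y₁;x₂,y₂), the second component of the period is 2b: SG(x, y+2b) = SG(x,y) for all (x,y) ∈ ℕ×ℕ, and 2b is the least positive integer q such that SG(x, y+q) = SG(x,y) holds for all (x,y) ∈ ℕ×ℕ. -/
/-- The minimum excludant of a set of naturals: the least natural number not in the set. -/
noncomputable def mex (S : Set ℕ) : ℕ := sInf {n : ℕ | n ∉ S}

/-- `SG` is the Sprague–Grundy function of the Lengyel transfer game `L(b; x₁,y₁; x₂,y₂)`: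
from `(x,y)` one may move to `(x, y−b)` (when `y ≥ b`), to `(x−x₁, y+y₁)` (when `x ≥ x₁`),
or to `(x−x₂, y+y₂)` (when `x ≥ x₂`), and `SG` satisfies the mex recurrence. -/
def IsLengyelSG (b x1 y1 x2 y2 : ℕ) (SG : ℕ → ℕ → ℕ) : Prop :=
  ∀ x y : ℕ, SG x y = mex
    ((if b ≤ y then ({SG x (y - b)} : Set ℕ) else ∅) ∪
     (if x1 ≤ x then ({SG (x - x1) (y + y1)} : Set ℕ) else ∅) ∪
     (if x2 ≤ x then ({SG (x - x2) (y + y2)} : Set ℕ) else ∅))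

/-!
By well-founded induction on `x`, the set `A x y` of values reached from `(x, y)` by horizontal
moves has period `2b` in `y`, so the question is about a single column. There
`SG x (y + b) ≠ SG x y`, because a value differs from those of its options. For `y < b` the position
`(x, y)` has no vertical move, so `SG x y = mex (A x y)`, while `SG x (y + 2b)` is the mex of the
same set with `SG x (y + b)` adjoined; adjoining a number other than the mex does not change it.
Periodicity then propagates upwards in steps of `b`. A column without horizontal moves has values
`0` on `[0, b)` and nonzero values on `[b, 2b)`, so it has no smaller period.
-/

section Mex

variable {S : Set ℕ}

theorem mex_notMem (hS : Sᶜ.Nonempty) : mex S ∉ S :=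
  Nat.sInf_mem hS

theorem mex_le_of_notMem {n : ℕ} (hn : n ∉ S) : mex S ≤ n :=
  Nat.sInf_le hn

theorem mex_empty : mex ∅ = 0 :=
  Nat.le_zero.mp (mex_le_of_notMem (Set.notMem_empty 0))

theorem mex_insert_of_ne_mex {v : ℕ} (hv : v ≠ mex S) : mex (insert v S) = mex S := by
  rcases Sᶜ.eq_empty_or_nonempty with hS | hS
  · rw [Set.compl_empty_iff.mp hS, Set.insert_eq_of_mem (Set.mem_univ v)]
  have mex_notMem_insert : mex S ∉ insert v S := by
    simp [hv.symm, mex_notMem hS]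
  have notMem_insert : mex (insert v S) ∉ insert v S := mex_notMem ⟨_, mex_notMem_insert⟩
  exact le_antisymm (mex_le_of_notMem mex_notMem_insert)
    (mex_le_of_notMem fun h => notMem_insert (Set.mem_insert_of_mem v h))

end Mex

/-- `f` lists the Sprague–Grundy values of a column of positions `y : ℕ` in which one may move from
`y` to `y - b` (when `b ≤ y`) or leave the column, `A y` being the set of values reachable from `y`
by leaving. -/
structure IsColumnSG (b : ℕ) (A : ℕ → Set ℕ) (f : ℕ → ℕ) : Prop where
  apply_of_lt : ∀ y < b, f y = mex (A y)
  apply_add : ∀ y, f (y + b) = mex (insert (f y) (A (y + b)))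

namespace IsColumnSG

variable {b : ℕ} {A : ℕ → Set ℕ} {f : ℕ → ℕ}

theorem apply_add_ne (hf : IsColumnSG b A f) (hA : ∀ y, (A y).Finite) (y : ℕ) :
    f (y + b) ≠ f y := by
  have hmex := mex_notMem ((hA (y + b)).insert (f y)).infinite_compl.nonempty
  rw [← hf.apply_add] at hmex
  exact fun h => hmex (Or.inl h)

theorem pos (hf : IsColumnSG b A f) (hA : ∀ y, (A y).Finite) : 0 < b :=
  Nat.pos_of_ne_zero fun hb => hf.apply_add_ne hA 0 (by rw [hb])

theorem periodic (hf : IsColumnSG b A f) (hA : ∀ y, (A y).Finite)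
    (hper : Function.Periodic A (2 * b)) : Function.Periodic f (2 * b) := by
  have apply_add_two_mul (y : ℕ) : f (y + 2 * b) = mex (insert (f (y + b)) (A y)) := by
    rw [← hper y, two_mul, ← add_assoc, hf.apply_add]
  intro y
  induction y using Nat.strong_induction_on with
  | _ y ih =>
    rw [apply_add_two_mul]
    rcases lt_or_ge y b with hy | hy
    · have hne := hf.apply_add_ne hA y
      rw [hf.apply_of_lt y hy] at hne ⊢
      exact mex_insert_of_ne_mex hne
    · obtain ⟨z, rfl⟩ := Nat.exists_eq_add_of_le' hy
      have hz : f (z + b + b) = f z := by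
        rw [add_assoc, ← two_mul]
        exact ih z (Nat.lt_add_of_pos_right (hf.pos hA))
      rw [hz, ← hf.apply_add]

theorem two_mul_le_of_periodic (hf : IsColumnSG b (fun _ => ∅) f) {q : ℕ} (hq : 0 < q)
    (hper : Function.Periodic f q) : 2 * b ≤ q := by
  have apply_eq_zero : ∀ y < b, f y = 0 := fun y hy => (hf.apply_of_lt y hy).trans mex_empty
  have apply_add_ne_zero (y : ℕ) (hy : y < b) : f (y + b) ≠ 0 :=
    apply_eq_zero y hy ▸ hf.apply_add_ne (fun _ => Set.finite_empty) y
  have hb : 0 < b := hf.pos fun _ => Set.finite_empty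
  by_contra! hlt
  rcases lt_or_ge q b with hqb | hbq
  · apply apply_add_ne_zero 0 hb
    rw [zero_add, ← Nat.sub_add_cancel hqb.le, hper]
    exact apply_eq_zero (b - q) (Nat.sub_lt hb hq)
  · apply apply_add_ne_zero (q - b) (by omega)
    rw [Nat.sub_add_cancel hbq, hper.eq]
    exact apply_eq_zero 0 hb

end IsColumnSG

section Transfer

variable {α : Type*}

/-- `SG` is the Sprague–Grundy function of the transfer game on `α × ℕ` in which one may move from
`(x, y)` to `(x, y - b)` (when `b ≤ y`) or to `(x', y + s)` for some `(x', s) ∈ moves x`. -/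
def IsTransferSG (b : ℕ) (moves : α → Set (α × ℕ)) (SG : α → ℕ → ℕ) : Prop :=
  ∀ x, IsColumnSG b (fun y => (fun m => SG m.1 (y + m.2)) '' moves x) (SG x)

variable [LT α] [WellFoundedLT α] {b : ℕ} {moves : α → Set (α × ℕ)} {SG : α → ℕ → ℕ}

theorem IsTransferSG.periodic (hSG : IsTransferSG b moves SG) (hfin : ∀ x, (moves x).Finite)
    (hlt : ∀ x, ∀ m ∈ moves x, m.1 < x) (x : α) : Function.Periodic (SG x) (2 * b) := by
  induction x using WellFoundedLT.induction with
  | _ x ih =>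
    refine (hSG x).periodic (fun _ => (hfin x).image _) fun y => Set.image_congr fun m hm => ?_
    rw [add_right_comm]
    exact ih m.1 (hlt x m hm) (y + m.2)

theorem vertical_period_is_two_b_general [Nonempty α] (hSG : IsTransferSG b moves SG)
    (hfin : ∀ x, (moves x).Finite) (hlt : ∀ x, ∀ m ∈ moves x, m.1 < x) :
    IsLeast {q : ℕ | 0 < q ∧ ∀ x, Function.Periodic (SG x) q} (2 * b) := by
  obtain ⟨x₀, -, hmin⟩ := wellFounded_lt.has_min (Set.univ : Set α) Set.univ_nonempty
  have hmoves : moves x₀ = ∅ :=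
    Set.eq_empty_of_forall_notMem fun m hm => hmin m.1 (Set.mem_univ _) (hlt x₀ m hm)
  have hcol : IsColumnSG b (fun _ => ∅) (SG x₀) := by
    simpa only [hmoves, Set.image_empty] using hSG x₀
  have hb : 0 < b := hcol.pos fun _ => Set.finite_empty
  exact ⟨⟨Nat.mul_pos two_pos hb, hSG.periodic hfin hlt⟩,
    fun q hq => hcol.two_mul_le_of_periodic hq.1 (hq.2 x₀)⟩

end Transfer

section Lengyel

variable {b x1 y1 x2 y2 : ℕ}

/-- The horizontal moves of the Lengyel transfer game available in column `x`, each given by the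
column it leads to and the amount by which it raises the second coordinate. -/
def lengyelMoves (x1 y1 x2 y2 x : ℕ) : Set (ℕ × ℕ) :=
  (if x1 ≤ x then {(x - x1, y1)} else ∅) ∪ (if x2 ≤ x then {(x - x2, y2)} else ∅)

theorem finite_lengyelMoves (x : ℕ) : (lengyelMoves x1 y1 x2 y2 x).Finite := by
  unfold lengyelMoves
  split_ifs <;> simp

theorem fst_lt_of_mem_lengyelMoves (hx1 : 0 < x1) (hx2 : 0 < x2) {x : ℕ} {m : ℕ × ℕ}
    (hm : m ∈ lengyelMoves x1 y1 x2 y2 x) : m.1 < x := by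
  unfold lengyelMoves at hm
  grind

theorem image_lengyelMoves (SG : ℕ → ℕ → ℕ) (x y : ℕ) :
    (fun m => SG m.1 (y + m.2)) '' lengyelMoves x1 y1 x2 y2 x =
      (if x1 ≤ x then {SG (x - x1) (y + y1)} else ∅) ∪
        (if x2 ≤ x then {SG (x - x2) (y + y2)} else ∅) := by
  simp only [lengyelMoves, Set.image_union, apply_ite (Set.image _), Set.image_singleton,
    Set.image_empty]

theorem IsLengyelSG.isTransferSG {SG : ℕ → ℕ → ℕ} (hSG : IsLengyelSG b x1 y1 x2 y2 SG) :
    IsTransferSG b (lengyelMoves x1 y1 x2 y2) SG := fun x =>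
  { apply_of_lt := fun y hy => by
      rw [hSG, image_lengyelMoves, if_neg hy.not_ge, Set.empty_union]
    apply_add := fun y => by
      rw [hSG, image_lengyelMoves, if_pos (Nat.le_add_left b y), Nat.add_sub_cancel,
        Set.union_assoc, Set.singleton_union] }

end Lengyel

/-- The second component of the period of any Lengyel transfer game is `2b`:
`SG(x, y+2b) = SG(x,y)` for all positions, and `2b` is the least positive integer
`q` such that `SG(x, y+q) = SG(x,y)` holds for all positions. -/
theorem vertical_period_is_two_b (b x1 x2 y1 y2 : ℕ) (hb : 0 < b) (hx1 : 0 < x1) (hx2 : 0 < x2)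
    (SG : ℕ → ℕ → ℕ) (hSG : IsLengyelSG b x1 y1 x2 y2 SG) :
    (∀ x y : ℕ, SG x (y + 2 * b) = SG x y) ∧
    IsLeast {q : ℕ | 0 < q ∧ ∀ x y : ℕ, SG x (y + q) = SG x y} (2 * b) := by
  have hleast := vertical_period_is_two_b_general hSG.isTransferSG finite_lengyelMoves
    fun _ _ => fst_lt_of_mem_lengyelMoves hx1 hx2
  exact ⟨hleast.1.2, hleast⟩
end

section
/- (Generalized nim-periodicity) Let S = {u₁, …, u_k} be a finite set of vectors in ℤⁿ, each strictly lexicographically negative, and let SG : ℕⁿ → ℕ be the Sprague–Grundy function of the vector game on ℕⁿ with move set S, i.e. SG(v) = mex { SG(v+u) : u ∈ S, v+u ∈ ℕⁿ }. Suppose some u_i ∈ S satisfies: for every v ∈ ℕⁿ with v + u_i ∈ ℕⁿ and every j ≠ i, v + u_j ∈ ℕⁿ if and only if v + u_i + u_j ∈ ℕⁿ. Then the game is nim-periodic in u_i: for every v ∈ ℕⁿ with v + u_i ∈ ℕⁿ, SG(v + u_i) = SG(v) ⊕ 1. -/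
/-- A vector of `ℤⁿ` is strictly lexicographically negative: its first nonzero
component is negative. -/
def LexNeg {n : ℕ} (u : Fin n → ℤ) : Prop :=
  ∃ i : Fin n, u i < 0 ∧ ∀ j : Fin n, j < i → u j = 0

/-!
Write `e` for the distinguished move, and let `w = v + e`. Adding `e` matches the options of `v`
other than `w` with the options of `w` other than `w + e`, so `v` behaves like the sum of `w` and a
nim-heap of size one. By induction matched options have Grundy values differing by `⊕ 1`; since
`m < g ⊕ 1` and `m ≠ g` give `m ⊕ 1 < g`, the extra option `w` of `v` turns the mex `g` at `w` into
`g ⊕ 1` at `v`.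
-/

section Mex

variable {T T' : Set ℕ} {m g : ℕ}

theorem mex_notMem_s7 (hT : Tᶜ.Nonempty) : mex T ∉ T :=
  Nat.sInf_mem hT

theorem mem_of_lt_mex (h : m < mex T) : m ∈ T :=
  not_not.mp (Nat.notMem_of_lt_sInf h)

theorem mex_eq_of_notMem_of_forall_lt (hg : g ∉ T) (h : ∀ m < g, m ∈ T) : mex T = g :=
  IsLeast.csInf_eq ⟨hg, fun _ hm => not_lt.mp fun hlt => hm (h _ hlt)⟩

theorem xor_one_lt_of_lt_xor_one (h : m < g ^^^ 1) (hne : m ≠ g) : m ^^^ 1 < g :=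
  (Nat.lt_xor_cases h).resolve_right fun hlt =>
    hne (Nat.xor_eq_zero_iff.mp (Nat.lt_one_iff.mp hlt))

theorem mex_eq_mex_xor_one (hT : Tᶜ.Nonempty) (hmem : mex T ∈ T')
    (hforth : ∀ m ∈ T', m = mex T ∨ m ^^^ 1 ∈ T)
    (hback : ∀ m ∈ T, m = mex T ^^^ 1 ∨ m ^^^ 1 ∈ T') : mex T' = mex T ^^^ 1 := by
  refine mex_eq_of_notMem_of_forall_lt (fun hxor => ?_) (fun m hm => ?_)
  · rcases hforth _ hxor with heq | hT_mem
    · simp at heq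
    · rw [Nat.xor_xor_cancel_right] at hT_mem
      exact mex_notMem_s7 hT hT_mem
  · by_cases hne : m = mex T
    · exact hne ▸ hmem
    · have hT_mem : m ^^^ 1 ∈ T := mem_of_lt_mex (xor_one_lt_of_lt_xor_one hm hne)
      rcases hback _ hT_mem with heq | hT'_mem
      · exact absurd (Nat.xor_left_injective heq) hne
      · rwa [Nat.xor_xor_cancel_right] at hT'_mem

end Mex

section Game

variable {α : Type*} {r e : α → α → Prop} {SG : α → ℕ}

/-- `SG` is a Sprague–Grundy function of the impartial game with positions `α`, in which `r w v`
means that `w` is an option of `v`. -/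
def IsSpragueGrundy (r : α → α → Prop) (SG : α → ℕ) : Prop :=
  ∀ v, SG v = mex (SG '' {w | r w v})

/-- The moves `e` of the game `r` act like emptying an additional nim-heap of size one: whenever
`e w v`, the options of `v` other than `w` are matched through `e` with the options of `w`, apart
from those that are themselves reached from `w` through `e`. -/
structure IsNimStep (r e : α → α → Prop) : Prop where
  isOption {w v : α} : e w v → r w v
  forth {w v x : α} : e w v → r x v → x = w ∨ ∃ y, r y w ∧ e y x
  back {w v y : α} : e w v → r y w → e y w ∨ ∃ x, r x v ∧ e y x

theorem IsSpragueGrundy.eq_xor_one_of_isNimStep (hSG : IsSpragueGrundy r SG) (hwf : WellFounded r)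
    (hfin : ∀ v, {w | r w v}.Finite) (he : IsNimStep r e) {v w : α} (hwv : e w v) :
    SG w = SG v ^^^ 1 := by
  induction v using hwf.induction generalizing w with
  | _ v ih =>
    suffices hv : SG v = SG w ^^^ 1 by rw [hv, Nat.xor_xor_cancel_right]
    rw [hSG v, hSG w]
    apply mex_eq_mex_xor_one ((hfin w).image SG).infinite_compl.nonempty <;> rw [← hSG w]
    · exact Set.mem_image_of_mem SG (he.isOption hwv)
    · rintro _ ⟨x, hxv, rfl⟩
      rcases he.forth hwv hxv with rfl | ⟨y, hyw, hyx⟩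
      · exact Or.inl rfl
      · exact Or.inr ⟨y, hyw, ih x hxv hyx⟩
    · rintro _ ⟨y, hyw, rfl⟩
      rcases he.back hwv hyw with hyw' | ⟨x, hxv, hyx⟩
      · exact Or.inl (ih w (he.isOption hwv) hyw')
      · exact Or.inr ⟨x, hxv, by rw [ih x hxv hyx, Nat.xor_xor_cancel_right]⟩

end Game

section VectorGame

variable {ι : Type*} {S : Set (ι → ℤ)} {u e : ι → ℤ} {v w : ι → ℕ}

/-- The move `u` of a vector game leads from `v` to `w`, that is, `w = v + u`. Stating this over `ℤ`
makes the legality condition `v + u ∈ ℕⁿ` implicit. -/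
def IsMove (u : ι → ℤ) (w v : ι → ℕ) : Prop :=
  ∀ i, (w i : ℤ) = v i + u i

/-- `w` is an option of `v` in the vector game with move set `S`. -/
def IsOption (S : Set (ι → ℤ)) (w v : ι → ℕ) : Prop :=
  ∃ u ∈ S, IsMove u w v

theorem isMove_iff :
    IsMove u w v ↔ (∀ i, 0 ≤ (v i : ℤ) + u i) ∧ w = fun i => ((v i : ℤ) + u i).toNat := by
  simp only [IsMove, funext_iff, ← forall_and]
  exact forall_congr' fun i => by omega

theorem isMove_toNat (h : ∀ i, 0 ≤ (v i : ℤ) + u i) :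
    IsMove u (fun i => ((v i : ℤ) + u i).toNat) v :=
  isMove_iff.mpr ⟨h, rfl⟩

theorem image_setOf_isOption (SG : (ι → ℕ) → ℕ) (v : ι → ℕ) :
    SG '' {w | IsOption S w v} = {m | ∃ u ∈ S, (∀ i, 0 ≤ (v i : ℤ) + u i) ∧
      m = SG (fun i => ((v i : ℤ) + u i).toNat)} := by
  ext m
  constructor
  · rintro ⟨w, ⟨u, hu, huw⟩, rfl⟩
    obtain ⟨hlegal, rfl⟩ := isMove_iff.mp huw
    exact ⟨u, hu, hlegal, rfl⟩
  · rintro ⟨u, hu, hlegal, rfl⟩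
    exact ⟨_, ⟨u, hu, isMove_toNat hlegal⟩, rfl⟩

theorem finite_setOf_isOption (h : {u ∈ S | ∀ i, 0 ≤ (v i : ℤ) + u i}.Finite) :
    {w | IsOption S w v}.Finite := by
  refine (h.image fun u i => ((v i : ℤ) + u i).toNat).subset ?_
  rintro w ⟨u, hu, huw⟩
  obtain ⟨hlegal, rfl⟩ := isMove_iff.mp huw
  exact ⟨u, ⟨hu, hlegal⟩, rfl⟩

theorem isNimStep_isMove (he : e ∈ S)
    (hcond : ∀ v : ι → ℕ, (∀ i, 0 ≤ (v i : ℤ) + e i) → ∀ u ∈ S, u ≠ e →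
      ((∀ i, 0 ≤ (v i : ℤ) + u i) ↔ (∀ i, 0 ≤ (v i : ℤ) + e i + u i))) :
    IsNimStep (IsOption S) (IsMove e) where
  isOption hwv := ⟨e, he, hwv⟩
  forth {w v x} hwv := by
    rintro ⟨u, hu, hxv⟩
    obtain ⟨hlegal, hw⟩ := isMove_iff.mp hwv
    obtain ⟨hlegal_u, hx⟩ := isMove_iff.mp hxv
    by_cases hue : u = e
    · subst hue
      exact Or.inl (hx.trans hw.symm)
    · have hy : ∀ i, 0 ≤ (w i : ℤ) + u i := fun i =>
        hwv i ▸ (hcond v hlegal u hu hue).mp hlegal_u i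
      refine Or.inr ⟨_, ⟨u, hu, isMove_toNat hy⟩, fun i => ?_⟩
      rw [isMove_toNat hy i, hwv i, hxv i, add_right_comm]
  back {w v y} hwv := by
    rintro ⟨u, hu, hyw⟩
    by_cases hue : u = e
    · exact Or.inl (hue ▸ hyw)
    · have hx : ∀ i, 0 ≤ (v i : ℤ) + u i :=
        (hcond v (isMove_iff.mp hwv).1 u hu hue).mpr fun i => hwv i ▸ (isMove_iff.mp hyw).1 i
      refine Or.inr ⟨_, ⟨u, hu, isMove_toNat hx⟩, fun i => ?_⟩
      rw [hyw i, hwv i, isMove_toNat hx i, add_right_comm]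

theorem generalized_nim_periodicity_general (hwf : WellFounded (IsOption S))
    (hfin : ∀ v : ι → ℕ, {u ∈ S | ∀ i, 0 ≤ (v i : ℤ) + u i}.Finite) {SG : (ι → ℕ) → ℕ}
    (hSG : ∀ v, SG v = mex {m | ∃ u ∈ S, (∀ i, 0 ≤ (v i : ℤ) + u i) ∧
      m = SG (fun i => ((v i : ℤ) + u i).toNat)})
    (he : e ∈ S)
    (hcond : ∀ v : ι → ℕ, (∀ i, 0 ≤ (v i : ℤ) + e i) → ∀ u ∈ S, u ≠ e →
      ((∀ i, 0 ≤ (v i : ℤ) + u i) ↔ (∀ i, 0 ≤ (v i : ℤ) + e i + u i)))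
    (v : ι → ℕ) (hv : ∀ i, 0 ≤ (v i : ℤ) + e i) :
    SG (fun i => ((v i : ℤ) + e i).toNat) = SG v ^^^ 1 := by
  have hgrundy : IsSpragueGrundy (IsOption S) SG := fun v => by
    rw [image_setOf_isOption]
    exact hSG v
  exact hgrundy.eq_xor_one_of_isNimStep hwf (fun v => finite_setOf_isOption (hfin v))
    (isNimStep_isMove he hcond) (isMove_toNat hv)

end VectorGame

section Lex

variable {n : ℕ}

theorem IsMove.toLex_lt {u : Fin n → ℤ} {v w : Fin n → ℕ} (h : IsMove u w v) (hu : LexNeg u) :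
    toLex w < toLex v := by
  obtain ⟨i, hi, hzero⟩ := hu
  refine ⟨i, fun j hj => ?_, ?_⟩
  · have hwj : (w j : ℤ) = v j := by rw [h j, hzero j hj, add_zero]
    exact_mod_cast hwj
  · have hwi : (w i : ℤ) < v i := by linarith [h i]
    exact_mod_cast hwi

theorem wellFounded_isOption_of_lexNeg {S : Set (Fin n → ℤ)} (hS : ∀ u ∈ S, LexNeg u) :
    WellFounded (IsOption S) :=
  Subrelation.wf (fun ⟨u, hu, huw⟩ => huw.toLex_lt (hS u hu))
    (InvImage.wf toLex wellFounded_lt)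

end Lex

/-- Generalized nim-periodicity for vector games.  Let `SG` be the Sprague–Grundy
function of the vector game on `ℕⁿ` with finite move set `S` of strictly
lexicographically negative vectors.  If `ui ∈ S` is such that for every position `v`
with `v + ui ∈ ℕⁿ` and every other move `u ∈ S`, `v + u ∈ ℕⁿ ↔ v + ui + u ∈ ℕⁿ`,
then the game is nim-periodic in `ui`: `SG(v + ui) = SG(v) ⊕ 1` whenever `v + ui ∈ ℕⁿ`. -/
theorem generalized_nim_periodicity (n : ℕ) (S : Finset (Fin n → ℤ))
    (hS : ∀ u ∈ S, LexNeg u)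
    (SG : (Fin n → ℕ) → ℕ)
    (hSG : ∀ v : Fin n → ℕ, SG v = mex
      {m : ℕ | ∃ u ∈ S, (∀ i : Fin n, 0 ≤ (v i : ℤ) + u i) ∧
        m = SG (fun i => ((v i : ℤ) + u i).toNat)})
    (ui : Fin n → ℤ) (hui : ui ∈ S)
    (hcond : ∀ v : Fin n → ℕ, (∀ i : Fin n, 0 ≤ (v i : ℤ) + ui i) →
      ∀ u ∈ S, u ≠ ui →
        ((∀ i : Fin n, 0 ≤ (v i : ℤ) + u i) ↔ (∀ i : Fin n, 0 ≤ (v i : ℤ) + ui i + u i))) :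
    ∀ v : Fin n → ℕ, (∀ i : Fin n, 0 ≤ (v i : ℤ) + ui i) →
      SG (fun i => ((v i : ℤ) + ui i).toNat) = SG v ^^^ 1 := by
  exact generalized_nim_periodicity_general (wellFounded_isOption_of_lexNeg hS)
    (fun _ => S.finite_toSet.subset (Set.sep_subset _ _)) hSG hui hcond
end

section
/- (The 2-block rule) In the Lengyel transfer game L(b;x₁,y₁;x₂,y₂), suppose x₂ ≤ x₁. Then every column whose index is congruent to one of 0, 1, …, x₁−1 modulo x₁+x₂ is not a 2-column: for every x with x mod (x₁+x₂) < x₁ and every y ∈ ℕ, SG(x,y) ∈ {0,1}. -/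
/-!
Moving by `b` exchanges the values `0` and `1` within each column (a form of Ferguson's pairing
property): the transfers from `(x, y + b)` land `b` above those from `(x, y)`, in earlier columns.
Consequently a position avoids the values `≥ 2` exactly when `0` and `1` do not both occur among
the values of its (at most two) transfer options. In the columns `x < max x₁ x₂` there is at most
one transfer. From `x ≥ x₁ + x₂` on, both transfer options can move to the position reached by
making the two transfers in succession; by induction its value is `0` or `1`, and neither transfer
option can share it.
-/

theorem mex_eq_iff {S : Set ℕ} {n : ℕ} (hS : S ≠ Set.univ) :
    mex S = n ↔ n ∉ S ∧ ∀ m < n, m ∈ S := by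
  have hne : {m | m ∉ S}.Nonempty := (Set.ne_univ_iff_exists_notMem S).mp hS
  have hleast : IsLeast {m | m ∉ S} (mex S) := ⟨Nat.sInf_mem hne, fun _ => Nat.sInf_le⟩
  rw [← hleast.isLeast_iff_eq]
  exact and_congr_right' (forall_congr' fun m => by rw [Set.mem_ofPred_eq, not_imp_comm, not_le])

/-- The values of a function `f` on positions at the options of `(x, y)` reached by a transfer,
that is, by one of the two moves that change the column. -/
def transferValues (x1 y1 x2 y2 : ℕ) (f : ℕ → ℕ → ℕ) (x y : ℕ) : Set ℕ :=
  {n | x1 ≤ x ∧ f (x - x1) (y + y1) = n ∨ x2 ≤ x ∧ f (x - x2) (y + y2) = n}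

/-- The values of a function `f` on positions at all the options of `(x, y)`. -/
def optionValues (b x1 y1 x2 y2 : ℕ) (f : ℕ → ℕ → ℕ) (x y : ℕ) : Set ℕ :=
  {n | b ≤ y ∧ f x (y - b) = n} ∪ transferValues x1 y1 x2 y2 f x y

/-- A column `f` alternates with step `b` if the step exchanges the values `0` and `1`. Since these
are equivalences, the step also takes values `≥ 2` to values `≥ 2`. -/
def IsAlternating (b : ℕ) (f : ℕ → ℕ) : Prop :=
  ∀ y, (f (y + b) = 0 ↔ f y = 1) ∧ (f (y + b) = 1 ↔ f y = 0)

section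

variable {b x1 y1 x2 y2 x y : ℕ} {f SG : ℕ → ℕ → ℕ}

theorem subsingleton_transferValues (hx : x < max x1 x2) :
    (transferValues x1 y1 x2 y2 f x y).Subsingleton := by
  rintro m (⟨hm, rfl⟩ | ⟨hm, rfl⟩) n (⟨hn, rfl⟩ | ⟨hn, rfl⟩)
  · rfl
  · exact absurd hx (max_le hm hn).not_gt
  · exact absurd hx (max_le hn hm).not_gt
  · rfl

theorem mem_transferValues_add_iff {m n : ℕ} (hx1 : 0 < x1) (hx2 : 0 < x2)
    (hf : ∀ x' < x, ∀ y, f x' (y + b) = m ↔ f x' y = n) :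
    m ∈ transferValues x1 y1 x2 y2 f x (y + b) ↔ n ∈ transferValues x1 y1 x2 y2 f x y := by
  simp only [transferValues, Set.mem_ofPred_eq, add_right_comm y b]
  exact or_congr
    (and_congr_right fun h => hf _ (Nat.sub_lt (hx1.trans_le h) hx1) _)
    (and_congr_right fun h => hf _ (Nat.sub_lt (hx2.trans_le h) hx2) _)

theorem optionValues_ne_univ : optionValues b x1 y1 x2 y2 f x y ≠ Set.univ := by
  intro huniv
  have hsub : optionValues b x1 y1 x2 y2 f x y ⊆
      {f x (y - b), f (x - x1) (y + y1), f (x - x2) (y + y2)} := by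
    rintro n (⟨-, rfl⟩ | ⟨-, rfl⟩ | ⟨-, rfl⟩) <;> simp
  exact Set.infinite_univ (huniv ▸ (Set.toFinite _).subset hsub)

theorem mem_optionValues {n : ℕ} :
    n ∈ optionValues b x1 y1 x2 y2 f x y ↔
      b ≤ y ∧ f x (y - b) = n ∨ n ∈ transferValues x1 y1 x2 y2 f x y :=
  Iff.rfl

theorem mem_optionValues_add {n : ℕ} :
    n ∈ optionValues b x1 y1 x2 y2 f x (y + b) ↔
      f x y = n ∨ n ∈ transferValues x1 y1 x2 y2 f x (y + b) := by
  simp only [mem_optionValues, le_add_iff_nonneg_left, zero_le, true_and, Nat.add_sub_cancel]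

namespace IsLengyelSG

theorem eq_mex_optionValues (hSG : IsLengyelSG b x1 y1 x2 y2 SG) (x y : ℕ) :
    SG x y = mex (optionValues b x1 y1 x2 y2 SG x y) := by
  rw [hSG x y]
  congr 1
  ext n
  simp only [optionValues, transferValues, Set.mem_union, Set.mem_ite_empty_right,
    Set.mem_singleton_iff, Set.mem_ofPred_eq, or_assoc, eq_comm (a := n)]

theorem eq_iff {n : ℕ} (hSG : IsLengyelSG b x1 y1 x2 y2 SG) :
    SG x y = n ↔ n ∉ optionValues b x1 y1 x2 y2 SG x y ∧
      ∀ m < n, m ∈ optionValues b x1 y1 x2 y2 SG x y := by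
  rw [hSG.eq_mex_optionValues x y, mex_eq_iff optionValues_ne_univ]

theorem eq_zero_iff (hSG : IsLengyelSG b x1 y1 x2 y2 SG) :
    SG x y = 0 ↔ 0 ∉ optionValues b x1 y1 x2 y2 SG x y := by
  simp [hSG.eq_iff]

theorem eq_one_iff (hSG : IsLengyelSG b x1 y1 x2 y2 SG) :
    SG x y = 1 ↔ 1 ∉ optionValues b x1 y1 x2 y2 SG x y ∧
      0 ∈ optionValues b x1 y1 x2 y2 SG x y := by
  simp [hSG.eq_iff]

theorem notMem_optionValues (hSG : IsLengyelSG b x1 y1 x2 y2 SG) (x y : ℕ) :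
    SG x y ∉ optionValues b x1 y1 x2 y2 SG x y :=
  (hSG.eq_iff.mp rfl).1

theorem apply_sub_add_notMem_transferValues (hSG : IsLengyelSG b x1 y1 x2 y2 SG)
    (hx : x1 + x2 ≤ x) :
    SG (x - (x1 + x2)) (y + (y1 + y2)) ∉ transferValues x1 y1 x2 y2 SG x y := by
  rintro (⟨-, h⟩ | ⟨-, h⟩)
  · refine hSG.notMem_optionValues (x - x1) (y + y1) (Or.inr (Or.inr ⟨by omega, ?_⟩))
    rw [h, Nat.sub_sub, add_assoc]
  · refine hSG.notMem_optionValues (x - x2) (y + y2) (Or.inr (Or.inl ⟨by omega, ?_⟩))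
    rw [h, Nat.sub_sub, add_assoc, add_comm x2, add_comm y2]

theorem eq_zero_iff_of_sub (hSG : IsLengyelSG b x1 y1 x2 y2 SG)
    (hsub : b ≤ y → SG x (y - b) = 0 → SG x y = 1) :
    SG x y = 0 ↔ SG x y ≠ 1 ∧ 0 ∉ transferValues x1 y1 x2 y2 SG x y := by
  constructor
  · intro h
    exact ⟨by omega, fun h0 => hSG.eq_zero_iff.mp h (Or.inr h0)⟩
  · rintro ⟨hne, h0⟩
    rw [hSG.eq_zero_iff, mem_optionValues]
    rintro (⟨hy, h⟩ | h)
    · exact hne (hsub hy h)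
    · exact h0 h

theorem eq_one_iff_of_sub (hSG : IsLengyelSG b x1 y1 x2 y2 SG)
    (hsub : b ≤ y → SG x (y - b) = 1 → SG x y = 0) :
    SG x y = 1 ↔ SG x y ≠ 0 ∧ 1 ∉ transferValues x1 y1 x2 y2 SG x y := by
  constructor
  · intro h
    exact ⟨by omega, fun h1 => (hSG.eq_one_iff.mp h).1 (Or.inr h1)⟩
  · rintro ⟨hne, h1⟩
    refine hSG.eq_one_iff.mpr ⟨?_, not_not.mp (hSG.eq_zero_iff.not.mp hne)⟩
    rintro (⟨hy, h⟩ | h)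
    · exact hne (hsub hy h)
    · exact h1 h

theorem isAlternating (hSG : IsLengyelSG b x1 y1 x2 y2 SG) (hb : 0 < b) (hx1 : 0 < x1)
    (hx2 : 0 < x2) (x : ℕ) : IsAlternating b (SG x) := by
  induction x using Nat.strong_induction_on with
  | _ x ihx =>
  intro y
  induction y using Nat.strong_induction_on with
  | _ y ihy =>
  have hzero := hSG.eq_zero_iff_of_sub (x := x) (y := y) fun hy => by
    simpa only [Nat.sub_add_cancel hy] using (ihy (y - b) (by omega)).2.mpr
  have hone := hSG.eq_one_iff_of_sub (x := x) (y := y) fun hy => by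
    simpa only [Nat.sub_add_cancel hy] using (ihy (y - b) (by omega)).1.mpr
  have htransfer0 := mem_transferValues_add_iff (y := y) (y1 := y1) (y2 := y2) hx1 hx2
    fun x' hx' y' => (ihx x' hx' y').1
  have htransfer1 := mem_transferValues_add_iff (y := y) (y1 := y1) (y2 := y2) hx1 hx2
    fun x' hx' y' => (ihx x' hx' y').2
  constructor
  · rw [hSG.eq_zero_iff, mem_optionValues_add, htransfer0, not_or, hone]
  · rw [hSG.eq_one_iff, mem_optionValues_add, mem_optionValues_add, htransfer0, htransfer1,
      not_or, ← ne_eq, ← hzero]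
    exact and_iff_left_of_imp Or.inl

theorem eq_zero_or_one_iff (hSG : IsLengyelSG b x1 y1 x2 y2 SG) (hb : 0 < b) (hx1 : 0 < x1)
    (hx2 : 0 < x2) :
    SG x y = 0 ∨ SG x y = 1 ↔
      ¬(0 ∈ transferValues x1 y1 x2 y2 SG x y ∧ 1 ∈ transferValues x1 y1 x2 y2 SG x y) := by
  have halt := hSG.isAlternating hb hx1 hx2 x (y - b)
  have hzero := hSG.eq_zero_iff_of_sub (x := x) (y := y) fun hy => by
    simpa only [Nat.sub_add_cancel hy] using halt.2.mpr
  have hone := hSG.eq_one_iff_of_sub (x := x) (y := y) fun hy => by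
    simpa only [Nat.sub_add_cancel hy] using halt.1.mpr
  tauto

end IsLengyelSG

theorem two_block_rule_general (hSG : IsLengyelSG b x1 y1 x2 y2 SG) (hb : 0 < b)
    (hx1 : 0 < x1) (hx2 : 0 < x2) (hx : x % (x1 + x2) < max x1 x2) :
    SG x y = 0 ∨ SG x y = 1 := by
  induction x using Nat.strong_induction_on generalizing y with
  | _ x ih =>
  rw [hSG.eq_zero_or_one_iff hb hx1 hx2]
  rintro ⟨h0, h1⟩
  rcases lt_or_ge x (x1 + x2) with hlt | hge
  · rw [Nat.mod_eq_of_lt hlt] at hx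
    exact zero_ne_one (subsingleton_transferValues hx h0 h1)
  · have hcommon := hSG.apply_sub_add_notMem_transferValues (y := y) hge
    rw [Nat.mod_eq_sub_mod hge] at hx
    rcases ih (x - (x1 + x2)) (by omega) (y := y + (y1 + y2)) hx with h | h
    · exact hcommon (h ▸ h0)
    · exact hcommon (h ▸ h1)

end

/-- The 2-block rule: if `x₂ ≤ x₁`, then every column whose index is congruent to one of
`0, 1, …, x₁−1` modulo `x₁+x₂` is not a 2-column: all its SG-values lie in `{0,1}`. -/
theorem two_block_rule (b x1 x2 y1 y2 : ℕ) (hb : 0 < b) (hx1 : 0 < x1) (hx2 : 0 < x2)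
    (hle : x2 ≤ x1)
    (SG : ℕ → ℕ → ℕ) (hSG : IsLengyelSG b x1 y1 x2 y2 SG) :
    ∀ x y : ℕ, x % (x1 + x2) < x1 → SG x y = 0 ∨ SG x y = 1 := fun _ _ hx =>
  two_block_rule_general hSG hb hx1 hx2 (lt_max_of_lt_left hx)
end

section
/- In any Lengyel transfer game L(b;x₁,y₁;x₂,y₂): for every (x,y) ∈ ℕ×ℕ with y ≥ y₁ + y₂, if SG*(x + x₁ + x₂, y − y₁ − y₂) = 2 then SG*(x,y) = 2. -/
/-!
Raising `y` by `b` acts on positions like adding a nim heap of size one: the options of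
`(x, y + b)` are `(x, y)` and the raised options of `(x, y)`. Hence
`SG (x, y + b) = SG (x, y) ^^^ 1`, so subtracting `b` from `y` preserves `SG / 2` (rounded down).

Let `P = (x + x₁ + x₂, y - y₁ - y₂)` and `Q = (x, y)`, and suppose `SG Q / 2 < SG P / 2`. Then `P`
has an option `R` with `SG R = SG Q`. Since `SG R / 2 ≠ SG P / 2`, the move to `R` is one of the two
transfers, and the other one leads from `R` to `Q`: an option of `R` with the same value as `R`,
which is impossible.
-/

theorem isLeast_mex {S : Set ℕ} (hS : S.Finite) : IsLeast Sᶜ (mex S) :=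
  ⟨Nat.sInf_mem hS.infinite_compl.nonempty, fun _ hn => Nat.sInf_le hn⟩

section GrundyFunction

variable {α : Type*} {options : α → Set α} {g : α → ℕ} {T : α → α}

/-- `g` is a Sprague–Grundy function of the impartial game in which the legal moves from `p` lead
to the elements of `options p`. Asking for a least missing value, rather than for an equality
with `mex`, excludes the junk value `mex Set.univ = 0`. -/
def IsGrundyFunction (options : α → Set α) (g : α → ℕ) : Prop :=
  ∀ p, IsLeast (g '' options p)ᶜ (g p)

/-- `T` behaves like the addition of a nim heap of size one: as in the disjunctive sum `p + *1`, the
moves from `T p` either remove the heap, leading to `p`, or play in `p` and keep the heap. -/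
def IsNimOneShift (options : α → Set α) (T : α → α) : Prop :=
  ∀ p, options (T p) = insert p (T '' options p)

namespace IsGrundyFunction

theorem apply_ne_of_mem_options (hg : IsGrundyFunction options g) {p q : α}
    (hq : q ∈ options p) : g q ≠ g p :=
  fun h => (hg p).1 ⟨q, hq, h⟩

theorem exists_mem_options_of_lt (hg : IsGrundyFunction options g) {p : α} {n : ℕ}
    (hn : n < g p) : ∃ q ∈ options p, g q = n := by
  by_contra h
  exact hn.not_ge ((hg p).2 h)

theorem apply_nimOneShift (hg : IsGrundyFunction options g)
    (hwf : WellFounded fun q p => q ∈ options p) (hT : IsNimOneShift options T) (p : α) :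
    g (T p) = g p ^^^ 1 := by
  induction p using hwf.induction with
  | _ p ih =>
  refine (hg (T p)).unique ⟨?_, fun n hn => ?_⟩
  · rw [hT p]
    rintro ⟨q, rfl | ⟨q, hq, rfl⟩, h⟩
    · exact one_ne_zero (Nat.xor_right_injective (h.symm.trans (Nat.xor_zero (g q)).symm))
    · rw [ih q hq] at h
      exact hg.apply_ne_of_mem_options hq (Nat.xor_left_injective h)
  · by_contra! hlt
    refine hn ?_
    rw [hT p]
    rcases Nat.lt_xor_cases hlt with hlt | hlt
    · obtain ⟨q, hq, hqn⟩ := hg.exists_mem_options_of_lt hlt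
      exact ⟨T q, .inr ⟨q, hq, rfl⟩, by simp [ih q hq, hqn]⟩
    · exact ⟨p, .inl rfl, (Nat.xor_eq_zero_iff.1 (Nat.lt_one_iff.1 hlt)).symm⟩

theorem div_two_le_div_two_of_forall_mem_options (hg : IsGrundyFunction options g)
    (hwf : WellFounded fun q p => q ∈ options p) (hT : IsNimOneShift options T) {p q : α}
    (hpq : ∀ r ∈ options p, T r = p ∨ q ∈ options r) : g p / 2 ≤ g q / 2 := by
  by_contra! hlt
  obtain ⟨r, hr, hrq⟩ := hg.exists_mem_options_of_lt (Nat.lt_of_div_lt_div hlt)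
  rcases hpq r hr with rfl | hqr
  · rw [hg.apply_nimOneShift hwf hT, hrq, Nat.xor_div_two, Nat.xor_zero] at hlt
    exact hlt.false
  · exact hg.apply_ne_of_mem_options hqr hrq.symm

end IsGrundyFunction

end GrundyFunction

section LengyelGame

variable {b x1 y1 x2 y2 : ℕ}

/-- The positions reachable in one move of `L(b; x₁,y₁; x₂,y₂)`, with each move written as an
equation without subtraction, so that its legality needs no separate condition. -/
def lengyelOptions (b x1 y1 x2 y2 : ℕ) (p : ℕ × ℕ) : Set (ℕ × ℕ) :=
  {q | q + (0, b) = p ∨ q + (x1, 0) = p + (0, y1) ∨ q + (x2, 0) = p + (0, y2)}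

theorem lengyelOptions_eq_union (x y : ℕ) :
    lengyelOptions b x1 y1 x2 y2 (x, y) =
      (if b ≤ y then {(x, y - b)} else ∅) ∪
      (if x1 ≤ x then {(x - x1, y + y1)} else ∅) ∪
      (if x2 ≤ x then {(x - x2, y + y2)} else ∅) := by
  ext ⟨u, v⟩
  simp only [lengyelOptions, Set.mem_ofPred_eq, Set.mem_union, Set.mem_ite_empty_right,
    Set.mem_singleton_iff, Prod.mk_add_mk, Prod.mk.injEq]
  omega

theorem wellFounded_lengyelOptions (hb : 0 < b) (hx1 : 0 < x1) (hx2 : 0 < x2) :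
    WellFounded fun q p => q ∈ lengyelOptions b x1 y1 x2 y2 p := by
  refine Subrelation.wf (r := Prod.Lex (· < ·) (· < ·)) ?_
    (wellFounded_lt.prod_lex wellFounded_lt)
  rintro ⟨u, v⟩ ⟨x, y⟩ h
  simp only [lengyelOptions, Set.mem_ofPred_eq, Prod.mk_add_mk, Prod.mk.injEq] at h
  simp only [Prod.lex_def]
  omega

theorem isNimOneShift_lengyelOptions :
    IsNimOneShift (lengyelOptions b x1 y1 x2 y2) (· + (0, b)) := by
  rintro ⟨x, y⟩
  ext ⟨u, v⟩
  simp only [lengyelOptions, Set.mem_ofPred_eq, Set.mem_insert_iff, Set.mem_image, Prod.exists,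
    Prod.mk_add_mk, Prod.mk.injEq]
  constructor
  · intro h
    by_cases huv : u = x ∧ v = y
    · exact .inl huv
    · exact .inr ⟨u, v - b, by omega, by omega⟩
  · rintro (h | ⟨u', v', h, huv⟩) <;> omega

theorem add_eq_or_mem_lengyelOptions {x y : ℕ} {r : ℕ × ℕ}
    (hr : r ∈ lengyelOptions b x1 y1 x2 y2 (x + x1 + x2, y)) :
    r + (0, b) = (x + x1 + x2, y) ∨ (x, y + (y1 + y2)) ∈ lengyelOptions b x1 y1 x2 y2 r := by
  simp only [lengyelOptions, Set.mem_ofPred_eq, Prod.ext_iff, Prod.fst_add, Prod.snd_add] at hr ⊢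
  omega

theorem IsLengyelSG.isGrundyFunction {SG : ℕ → ℕ → ℕ} (hSG : IsLengyelSG b x1 y1 x2 y2 SG) :
    IsGrundyFunction (lengyelOptions b x1 y1 x2 y2) (Function.uncurry SG) := by
  rintro ⟨x, y⟩
  have hfin : (lengyelOptions b x1 y1 x2 y2 (x, y)).Finite := by
    rw [lengyelOptions_eq_union]
    split_ifs <;> simp
  have hmex : SG x y = mex (Function.uncurry SG '' lengyelOptions b x1 y1 x2 y2 (x, y)) := by
    simp only [hSG x y, lengyelOptions_eq_union, Set.image_union, apply_ite (Set.image _),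
      Set.image_singleton, Set.image_empty, Function.uncurry_apply_pair]
  rw [Function.uncurry_apply_pair, hmex]
  exact isLeast_mex (hfin.image _)

end LengyelGame

/-- In any Lengyel transfer game: if `SG*(x+x₁+x₂, y−y₁−y₂) = 2` (with `y ≥ y₁+y₂`),
then `SG*(x,y) = 2`, where `SG* = min(SG, 2)`. -/
theorem bad_pair_pullback (b x1 x2 y1 y2 : ℕ) (hb : 0 < b) (hx1 : 0 < x1) (hx2 : 0 < x2)
    (SG : ℕ → ℕ → ℕ) (hSG : IsLengyelSG b x1 y1 x2 y2 SG) :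
    ∀ x y : ℕ, y1 + y2 ≤ y →
      min (SG (x + x1 + x2) (y - (y1 + y2))) 2 = 2 → min (SG x y) 2 = 2 := by
  intro x y hy h
  obtain ⟨z, rfl⟩ := Nat.exists_eq_add_of_le' hy
  rw [Nat.add_sub_cancel] at h
  have hle : SG (x + x1 + x2) z / 2 ≤ SG x (z + (y1 + y2)) / 2 :=
    hSG.isGrundyFunction.div_two_le_div_two_of_forall_mem_options
      (wellFounded_lengyelOptions hb hx1 hx2) isNimOneShift_lengyelOptions
      fun _ hr => add_eq_or_mem_lengyelOptions hr
  omega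
end
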